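/- Let P be a finite graded bounded Eulerian poset of rank r, i.e. μ_{st} = (−1)^{ρ_{st}} for all s ≤ t, so that ε defined by ε_{st}(x) = (x−1)^{ρ_{st}} is a (P,ρ)-kernel. Then the ε-Chow polynomial of P equals the h-polynomial of the barycentric subdivision of P; explicitly, ℋ_P(x) = Σ_{S ⊆ {1,…,r−1}} β_P(S)·x^{|S|}, where β_P is the flag h-vector of P. -/

import Mathlib

/-!
Expanding the flag `h`-vector shows that the right-hand side is the chain sum
`∑_C x^{|C|} (1 - x)^{r - 1 - |C|}` over the chains `C` of the open interval `(⊥, ⊤)`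
(`sum_flagH_eq_chainPoly`). Splitting off the least element of `C` gives the recursion
`F_s = (1 - x)^{ρ_s - 1} + x ∑_{s < w < ⊤} (1 - x)^{ρ_{sw} - 1} F_w`, with `ρ_s = ρ_{s⊤}`, for the
analogous sums `F_s` over `(s, ⊤)` (`chainPoly_rec`).

On the other side, `ℋ = -(ε̄)⁻¹` means `(xδ - ε) ℋ = (x - 1) δ` (`chow_kernel_rec`). The Eulerian
condition says exactly that the function `(1 - x)^{ρ_{st}}` is the inverse of `ε`
(`eulerian_inverse`). Multiplying by this inverse yields `(x ε⁻¹ - δ) ℋ = (x - 1) ε⁻¹`, which off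
the diagonal is `1 - x` times the recursion above with `F_s` replaced by `ℋ_{s⊤}` (`chow_rec`).
Hence `ℋ_{s⊤} = F_s` for all `s` by induction from the top.
-/

open Finset Polynomial
open scoped Classical

noncomputable section

variable {α : Type*}

/-- Convolution product in the incidence algebra of a locally finite poset over `ℤ[x]`.
Only the values on intervals `s ≤ t` are relevant. -/
def conv [PartialOrder α] [LocallyFiniteOrder α] (a b : α → α → Polynomial ℤ) :
    α → α → Polynomial ℤ :=
  fun s t => ∑ w ∈ Finset.Icc s t, a s w * b w t

/-- The identity `δ` of the incidence algebra. -/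
def dlt [PartialOrder α] : α → α → Polynomial ℤ :=
  fun s t => if s = t then 1 else 0

/-- The involution `a ↦ a^rev`, given by `(a^rev)_{st}(x) = x^{ρ_{st}} a_{st}(1/x)`. -/
def rev (ρ : α → α → ℕ) (a : α → α → Polynomial ℤ) : α → α → Polynomial ℤ :=
  fun s t => (a s t).reflect (ρ s t)

/-- A weak rank function on a poset. -/
structure IsWeakRank [Preorder α] (ρ : α → α → ℕ) : Prop where
  pos : ∀ ⦃s t : α⦄, s < t → 0 < ρ s t
  add : ∀ ⦃s w t : α⦄, s ≤ w → w ≤ t → ρ s t = ρ s w + ρ w t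

/-- `κ` is a `(P,ρ)`-kernel: it lies in `I_ρ(P)`, is `1` on the diagonal, and `κ⁻¹ = κ^rev`. -/
structure IsKernel [PartialOrder α] [LocallyFiniteOrder α] (ρ : α → α → ℕ)
    (κ : α → α → Polynomial ℤ) : Prop where
  degLE : ∀ ⦃s t : α⦄, s ≤ t → (κ s t).natDegree ≤ ρ s t
  diag : ∀ s : α, κ s s = 1
  left : ∀ ⦃s t : α⦄, s ≤ t → conv (rev ρ κ) κ s t = dlt s t
  right : ∀ ⦃s t : α⦄, s ≤ t → conv κ (rev ρ κ) s t = dlt s t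

/-- The reduced kernel `κ̄`: `κ̄_{st} = κ_{st}/(x-1)` for `s < t` and `κ̄_{ss} = -1`. -/
def red [PartialOrder α] (κ : α → α → Polynomial ℤ) : α → α → Polynomial ℤ :=
  fun s t => if s = t then -1 else κ s t /ₘ (X - 1)

/-- `H` is the Chow function of `κ`, i.e. `H = -(κ̄)⁻¹`. -/
structure IsChow [PartialOrder α] [LocallyFiniteOrder α] (κ H : α → α → Polynomial ℤ) : Prop where
  left : ∀ ⦃s t : α⦄, s ≤ t → conv (red κ) H s t = -dlt s t
  right : ∀ ⦃s t : α⦄, s ≤ t → conv H (red κ) s t = -dlt s t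

/-- `f` is the right KLS function of the kernel `κ`. -/
structure IsRightKLS [PartialOrder α] [LocallyFiniteOrder α] (ρ : α → α → ℕ)
    (κ f : α → α → Polynomial ℤ) : Prop where
  diag : ∀ s : α, f s s = 1
  degLT : ∀ ⦃s t : α⦄, s < t → 2 * (f s t).natDegree < ρ s t
  rev_eq : ∀ ⦃s t : α⦄, s ≤ t → rev ρ f s t = conv κ f s t

/-- `g` is the left KLS function of the kernel `κ`. -/
structure IsLeftKLS [PartialOrder α] [LocallyFiniteOrder α] (ρ : α → α → ℕ)
    (κ g : α → α → Polynomial ℤ) : Prop where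
  diag : ∀ s : α, g s s = 1
  degLT : ∀ ⦃s t : α⦄, s < t → 2 * (g s t).natDegree < ρ s t
  rev_eq : ∀ ⦃s t : α⦄, s ≤ t → rev ρ g s t = conv g κ s t

/-- `p` is symmetric with center of symmetry `d/2`, i.e. `p(x) = x^d p(1/x)`. -/
def PolySymm (d : ℕ) (p : Polynomial ℤ) : Prop := p.natDegree ≤ d ∧ p.reflect d = p

/-- All coefficients of `p` are non-negative. -/
def PolyNonneg (p : Polynomial ℤ) : Prop := ∀ n, 0 ≤ p.coeff n

/-- The coefficient sequence of `p` is unimodal. -/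
def PolyUnimodal (p : Polynomial ℤ) : Prop :=
  ∃ j, (∀ i < j, p.coeff i ≤ p.coeff (i + 1)) ∧ ∀ i, j ≤ i → p.coeff (i + 1) ≤ p.coeff i

end

noncomputable section

variable {α : Type*}

/-- `mu` is the Möbius function of the poset: `mu = ζ⁻¹`. -/
def IsMobius [PartialOrder α] [LocallyFiniteOrder α] (mu : α → α → ℤ) : Prop :=
  (∀ s : α, mu s s = 1) ∧
  (∀ ⦃s t : α⦄, s < t → ∑ w ∈ Finset.Icc s t, mu s w = 0) ∧
  (∀ ⦃s t : α⦄, s < t → ∑ w ∈ Finset.Icc s t, mu w t = 0)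

/-- The characteristic function `χ = μ·ζ^rev`, i.e. `χ_{st}(x) = Σ_{s≤w≤t} μ_{sw} x^{ρ_{wt}}`. -/
def chi [PartialOrder α] [LocallyFiniteOrder α] (ρ : α → α → ℕ) (mu : α → α → ℤ) :
    α → α → Polynomial ℤ :=
  fun s t => ∑ w ∈ Finset.Icc s t, Polynomial.C (mu s w) * X ^ ρ w t

/-- Convolution `ζ^rev · a`, where `ζ^rev_{sw} = x^{ρ_{sw}}`.  Applied to the Chow function `H`
of the kernel `χ` (whose left KLS function is `g = ζ`) it gives the left augmented Chow function
`G = g^rev · H`; applied to the right KLS function `f` it gives the `Z`-function `Z = g^rev·f`. -/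
def zrevConv [PartialOrder α] [LocallyFiniteOrder α] (ρ : α → α → ℕ)
    (a : α → α → Polynomial ℤ) : α → α → Polynomial ℤ :=
  fun s t => ∑ w ∈ Finset.Icc s t, X ^ ρ s w * a w t

/-- `rk` witnesses that the finite bounded poset is graded: covering relations increase `rk`
by exactly one, `rk` is strictly monotone (automatic in the finite graded case), and `rk ⊥ = 0`. -/
structure GradedData [PartialOrder α] [BoundedOrder α] (rk : α → ℕ) : Prop where
  cov : ∀ ⦃a b : α⦄, a ⋖ b → rk b = rk a + 1
  mono : StrictMono rk
  bot : rk (⊥ : α) = 0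

/-- The weak rank function `ρ_{st} = rk t - rk s` induced by a rank function `rk`. -/
def rdiff (rk : α → ℕ) : α → α → ℕ := fun a b => rk b - rk a

end

noncomputable section

variable {α : Type*}

/-- The flag `f`-vector of a finite ranked poset: `α_P(S)` is the number of chains whose set of
ranks is exactly `S`. -/
def flagF [PartialOrder α] [Fintype α] (rk : α → ℕ) (S : Finset ℕ) : ℕ :=
  (Finset.univ.filter
      (fun C : Finset α => IsChain (· ≤ ·) (C : Set α) ∧ C.image rk = S)).card

/-- The flag `h`-vector of a finite ranked poset:
`β_P(S) = Σ_{T ⊆ S} (-1)^{|S∖T|} α_P(T)`. -/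
def flagH [PartialOrder α] [Fintype α] (rk : α → ℕ) (S : Finset ℕ) : ℤ :=
  ∑ T ∈ S.powerset, (-1) ^ (S.card - T.card) * (flagF rk T : ℤ)

end

/-! ### Chains -/

/-- The chains of the open interval `(s, ⊤)`, the empty chain included. -/
noncomputable def chainsAbove {α : Type*} [PartialOrder α] [BoundedOrder α] [Fintype α]
    (s : α) : Finset (Finset α) :=
  univ.filter fun C => IsChain (· ≤ ·) (C : Set α) ∧ ∀ c ∈ C, s < c ∧ c < ⊤

/-- The polynomial `∑_C x^{|C|} (1 - x)^{ρ - 1 - |C|}` over the chains `C` of `(s, ⊤)`, where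
`ρ` is the length of `[s, ⊤]`; it is the `h`-polynomial of the order complex of `(s, ⊤)`. The
subtractions do not truncate when `s < ⊤`, and the value at `s = ⊤` is `1`. -/
noncomputable def chainPoly {α : Type*} [PartialOrder α] [BoundedOrder α] [Fintype α]
    (rk : α → ℕ) (s : α) : ℤ[X] :=
  ∑ C ∈ chainsAbove s, X ^ #C * (1 - X) ^ (rk (⊤ : α) - rk s - 1 - #C)

lemma card_image_rk {α : Type*} [PartialOrder α] {rk : α → ℕ} (hm : StrictMono rk) {C : Finset α}
    (hC : IsChain (· ≤ ·) (C : Set α)) : #(C.image rk) = #C := by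
  apply card_image_of_injOn
  intro a ha b hb hab
  rcases hC.total ha hb with h | h
  · by_contra hne
    exact (hm (lt_of_le_of_ne h hne)).ne hab
  · by_contra hne
    exact (hm (lt_of_le_of_ne h (Ne.symm hne))).ne hab.symm

section

variable {α : Type*} [PartialOrder α] [BoundedOrder α] [Fintype α]

lemma mem_chainsAbove {s : α} {C : Finset α} :
    C ∈ chainsAbove s ↔ IsChain (· ≤ ·) (C : Set α) ∧ ∀ c ∈ C, s < c ∧ c < ⊤ := by
  simp [chainsAbove]

lemma card_le_of_mem_chainsAbove {rk : α → ℕ} (hm : StrictMono rk) {s : α} {C : Finset α}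
    (hC : C ∈ chainsAbove s) : #C ≤ rk (⊤ : α) - rk s - 1 := by
  rw [mem_chainsAbove] at hC
  rw [← card_image_rk hm hC.1, ← Nat.card_Ioo]
  apply card_le_card
  intro n hn
  obtain ⟨c, hc, rfl⟩ := mem_image.1 hn
  exact mem_Ioo.2 ⟨hm (hC.2 c hc).1, hm (hC.2 c hc).2⟩

/-- A chain of `(s, ⊤)` is empty or consists of its least element `w` and a chain of `(w, ⊤)`. -/
lemma sum_chainsAbove (s : α) (f : Finset α → ℤ[X]) :
    ∑ C ∈ chainsAbove s, f C =
      f ∅ + ∑ w ∈ univ.filter (fun w : α => s < w ∧ w < ⊤),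
        ∑ C ∈ chainsAbove w, f (insert w C) := by
  have h0 : (∅ : Finset α) ∈ chainsAbove s := by simp [mem_chainsAbove]
  rw [← add_sum_erase _ _ h0, sum_sigma']
  congr 1
  symm
  refine sum_bij (fun p _ => insert p.1 p.2) ?_ ?_ ?_ ?_
  · rintro ⟨w, C⟩ h
    simp only [mem_sigma, mem_filter, mem_univ, true_and, mem_chainsAbove] at h
    obtain ⟨⟨hsw, hwt⟩, hC, hC'⟩ := h
    simp only [mem_erase, mem_chainsAbove, coe_insert]
    refine ⟨insert_ne_empty _ _, hC.insert fun b hb _ => Or.inl (hC' b hb).1.le, ?_⟩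
    intro c hc
    rcases mem_insert.1 hc with rfl | hc
    · exact ⟨hsw, hwt⟩
    · exact ⟨hsw.trans (hC' c hc).1, (hC' c hc).2⟩
  · rintro ⟨w, C⟩ h ⟨w', C'⟩ h' heq
    simp only [mem_sigma, mem_chainsAbove] at h h' heq
    have hw : w ∉ C := fun hw => lt_irrefl _ (h.2.2 w hw).1
    have hw' : w' ∉ C' := fun hw => lt_irrefl _ (h'.2.2 w' hw).1
    have e1 : w' ≤ w := by
      have : w ∈ insert w' C' := heq ▸ mem_insert_self w C
      rcases mem_insert.1 this with e | e
      · exact e.ge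
      · exact (h'.2.2 w e).1.le
    have e2 : w ≤ w' := by
      have : w' ∈ insert w C := heq ▸ mem_insert_self w' C'
      rcases mem_insert.1 this with e | e
      · exact e.ge
      · exact (h.2.2 w' e).1.le
    obtain rfl := le_antisymm e1 e2
    have : C = C' := by rw [← erase_insert hw, heq, erase_insert hw']
    rw [this]
  · intro D hD
    simp only [mem_erase, mem_chainsAbove] at hD
    obtain ⟨hne, hch, hD⟩ := hD
    obtain ⟨w, hw⟩ := D.exists_minimal (nonempty_iff_ne_empty.2 hne)
    refine ⟨⟨w, D.erase w⟩, ?_, insert_erase hw.1⟩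
    simp only [mem_sigma, mem_filter, mem_univ, true_and, mem_chainsAbove]
    refine ⟨hD w hw.1, hch.mono (by simp), ?_⟩
    intro c hc
    obtain ⟨hcw, hc⟩ := mem_erase.1 hc
    refine ⟨lt_of_le_of_ne ?_ (Ne.symm hcw), (hD c hc).2⟩
    rcases hch.total hw.1 hc with h | h
    · exact h
    · exact hw.2 hc h
  · intros
    rfl

lemma chainPoly_rec {rk : α → ℕ} (hm : StrictMono rk) (s : α) :
    chainPoly rk s = (1 - X) ^ (rk (⊤ : α) - rk s - 1) +
      ∑ w ∈ univ.filter (fun w : α => s < w ∧ w < ⊤),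
        X * (1 - X) ^ (rk w - rk s - 1) * chainPoly rk w := by
  unfold chainPoly
  rw [sum_chainsAbove]
  congr 1
  · simp
  · refine sum_congr rfl fun w hw => ?_
    rw [mul_sum]
    refine sum_congr rfl fun C hC => ?_
    have hcard := card_le_of_mem_chainsAbove hm hC
    simp only [mem_filter, mem_univ, true_and] at hw
    have h1 := hm hw.1
    have h2 := hm hw.2
    have hnot : w ∉ C := fun h => lt_irrefl _ ((mem_chainsAbove.1 hC).2 w h).1
    rw [card_insert_of_notMem hnot,
      show rk (⊤ : α) - rk s - 1 - (#C + 1) =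
        (rk w - rk s - 1) + (rk (⊤ : α) - rk w - 1 - #C) by omega]
    ring

/-! ### The flag h-vector -/

lemma sum_superset (N T : Finset ℕ) (hT : T ⊆ N) :
    ∑ S ∈ Finset.Icc T N, (-1 : ℤ[X]) ^ (#S - #T) * X ^ #S =
      X ^ #T * (1 - X) ^ (#N - #T) := by
  rw [Finset.Icc_eq_image_powerset hT, sum_image]
  · have h := Finset.sum_pow_mul_eq_add_pow (-X : ℤ[X]) 1 (N \ T)
    rw [card_sdiff_of_subset hT] at h
    rw [show (1 - X : ℤ[X]) = -X + 1 by ring, ← h, mul_sum]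
    refine sum_congr rfl fun U hU => ?_
    have hd : Disjoint T U := disjoint_of_subset_right (mem_powerset.1 hU) disjoint_sdiff
    rw [card_union_of_disjoint hd, Nat.add_sub_cancel_left, one_pow, neg_pow (X : ℤ[X])]
    ring
  · intro U hU V hV h
    have hU' : Disjoint T U := disjoint_of_subset_right (mem_powerset.1 hU) disjoint_sdiff
    have hV' : Disjoint T V := disjoint_of_subset_right (mem_powerset.1 hV) disjoint_sdiff
    simp only at h
    rw [← union_sdiff_cancel_left hU', h, union_sdiff_cancel_left hV']

lemma sum_flagH_eq_sum_flagF (rk : α → ℕ) (N : Finset ℕ) :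
    ∑ S ∈ N.powerset, C (flagH rk S) * X ^ #S =
      ∑ T ∈ N.powerset, (flagF rk T : ℤ[X]) * (X ^ #T * (1 - X) ^ (#N - #T)) := by
  have h1 : ∀ S ∈ N.powerset, C (flagH rk S) * X ^ #S =
      ∑ T ∈ S.powerset, (flagF rk T : ℤ[X]) * ((-1 : ℤ[X]) ^ (#S - #T) * X ^ #S) := by
    intro S _
    simp only [flagH, map_sum, sum_mul, map_mul, map_pow, map_neg, map_one, map_natCast]
    exact sum_congr rfl fun T _ => by ring
  rw [sum_congr rfl h1,
    sum_comm' (t' := N.powerset) (s' := fun T => Finset.Icc T N)]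
  · refine sum_congr rfl fun T hT => ?_
    rw [← mul_sum, sum_superset N T (mem_powerset.1 hT)]
  · intro S T
    simp only [mem_powerset, Finset.mem_Icc]
    exact ⟨fun h => ⟨⟨h.2, h.1⟩, h.2.trans h.1⟩, fun h => ⟨h.1.2, h.1.1⟩⟩

lemma sum_flagH_eq_chainPoly {rk : α → ℕ} (hg : GradedData rk) :
    ∑ S ∈ (Finset.Icc 1 (rk (⊤ : α) - 1)).powerset, C (flagH rk S) * X ^ #S =
      chainPoly rk (⊥ : α) := by
  have hmaps : ∀ D : Finset α, IsChain (· ≤ ·) (D : Set α) →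
      (D ∈ chainsAbove (⊥ : α) ↔ D.image rk ∈ (Finset.Icc 1 (rk (⊤ : α) - 1)).powerset) := by
    intro D hD
    simp only [mem_chainsAbove, hD, true_and, mem_powerset, image_subset_iff, Finset.mem_Icc]
    refine forall₂_congr fun c _ => ⟨fun h => ?_, fun h => ⟨?_, ?_⟩⟩
    · have h1 := hg.mono h.1
      have h2 := hg.mono h.2
      omega
    · rw [bot_lt_iff_ne_bot]
      rintro rfl
      have := hg.bot
      omega
    · rw [lt_top_iff_ne_top]
      rintro rfl
      omega
  rw [sum_flagH_eq_sum_flagF, chainPoly,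
    ← sum_fiberwise_of_maps_to (g := fun D : Finset α => D.image rk)
      (fun D hD => (hmaps D (mem_chainsAbove.1 hD).1).1 hD)]
  refine sum_congr rfl fun T hT => ?_
  have hfib : (chainsAbove (⊥ : α)).filter (fun D => D.image rk = T) =
      univ.filter (fun D : Finset α => IsChain (· ≤ ·) (D : Set α) ∧ D.image rk = T) := by
    ext D
    simp only [mem_filter, mem_univ, true_and]
    constructor
    · rintro ⟨h1, h2⟩
      exact ⟨(mem_chainsAbove.1 h1).1, h2⟩
    · rintro ⟨h1, rfl⟩
      exact ⟨(hmaps D h1).2 hT, rfl⟩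
  rw [hfib, flagF, ← nsmul_eq_mul, ← sum_const]
  refine sum_congr rfl fun D hD => ?_
  obtain ⟨h1, rfl⟩ := (mem_filter.1 hD).2
  rw [card_image_rk hg.mono h1, Nat.card_Icc, hg.bot]
  simp

/-! ### The Chow function -/

variable [LocallyFiniteOrder α]

/-- For an Eulerian poset, `(1 - x)^{ρ_{st}}` is a left inverse of `ε`. -/
lemma eulerian_inverse {rk : α → ℕ} (hm : StrictMono rk) {mu : α → α → ℤ} (hmu : IsMobius mu)
    (heul : ∀ s t : α, s ≤ t → mu s t = (-1 : ℤ) ^ (rk t - rk s)) {s t : α} (hst : s ≤ t) :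
    ∑ w ∈ Finset.Icc s t, (1 - X : ℤ[X]) ^ (rk w - rk s) * (X - 1) ^ (rk t - rk w) =
      if s = t then 1 else 0 := by
  split_ifs with h
  · subst h
    simp
  · have h0 := hmu.2.1 (lt_of_le_of_ne hst h)
    have h1 : ∀ w ∈ Finset.Icc s t,
        (1 - X : ℤ[X]) ^ (rk w - rk s) * (X - 1) ^ (rk t - rk w) =
          C (mu s w) * (X - 1) ^ (rk t - rk s) := by
      intro w hw
      obtain ⟨hsw, hwt⟩ := Finset.mem_Icc.1 hw
      have a := hm.monotone hsw
      have b := hm.monotone hwt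
      rw [heul s w hsw, show rk t - rk s = (rk w - rk s) + (rk t - rk w) by omega, pow_add,
        ← neg_sub X 1, neg_pow]
      simp only [map_pow, map_neg, map_one]
      ring
    rw [sum_congr rfl h1, ← sum_mul, ← map_sum, h0]
    simp

lemma red_eps_mul {rk : α → ℕ} (hm : StrictMono rk) {s t : α} (hst : s < t) :
    (X - 1 : ℤ[X]) * red (fun s t : α => ((X : ℤ[X]) - 1) ^ (rk t - rk s)) s t =
      (X - 1 : ℤ[X]) ^ (rk t - rk s) := by
  have h := hm hst
  obtain ⟨k, hk⟩ : ∃ k, rk t - rk s = k + 1 := ⟨rk t - rk s - 1, by omega⟩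
  have hmonic : (X - 1 : ℤ[X]).Monic := by simpa using monic_X_sub_C (1 : ℤ)
  simp only [red, hst.ne, if_false, hk, pow_succ']
  rw [mul_divByMonic_cancel_left _ hmonic]

/-- The defining relation of the Chow function in the form `(xδ - ε) ℋ = (x - 1) δ`. -/
lemma chow_kernel_rec {rk : α → ℕ} (hm : StrictMono rk) {H : α → α → ℤ[X]}
    (hH : IsChow (fun s t : α => ((X : ℤ[X]) - 1) ^ (rk t - rk s)) H) (s : α) :
    X * H s ⊤ - ∑ w ∈ Finset.Icc s ⊤, (X - 1) ^ (rk w - rk s) * H w ⊤ =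
      if s = ⊤ then X - 1 else 0 := by
  have h := hH.left (le_top : s ≤ ⊤)
  have hs : s ∈ Finset.Icc s ⊤ := by simp
  rw [conv, ← add_sum_erase _ _ hs] at h
  rw [← add_sum_erase _ _ hs]
  have hsum : ∑ w ∈ (Finset.Icc s ⊤).erase s, (X - 1 : ℤ[X]) ^ (rk w - rk s) * H w ⊤ =
      (X - 1) * ∑ w ∈ (Finset.Icc s ⊤).erase s,
        red (fun s t : α => ((X : ℤ[X]) - 1) ^ (rk t - rk s)) s w * H w ⊤ := by
    rw [mul_sum]
    refine sum_congr rfl fun w hw => ?_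
    obtain ⟨hne, hw⟩ := mem_erase.1 hw
    rw [← mul_assoc, red_eps_mul hm (lt_of_le_of_ne (Finset.mem_Icc.1 hw).1 hne.symm)]
  rw [hsum]
  have hd : red (fun s t : α => ((X : ℤ[X]) - 1) ^ (rk t - rk s)) s s = -1 := by simp [red]
  rw [hd] at h
  simp only [Nat.sub_self, pow_zero, dlt] at h ⊢
  split_ifs at h ⊢ <;> linear_combination (1 - X) * h

lemma chow_top {rk : α → ℕ} {H : α → α → ℤ[X]}
    (hH : IsChow (fun s t : α => ((X : ℤ[X]) - 1) ^ (rk t - rk s)) H) : H ⊤ ⊤ = 1 := by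
  have h := hH.left (le_refl (⊤ : α))
  simpa [conv, red, dlt] using h

/-- The relation `(x ε⁻¹ - δ) ℋ = (x - 1) ε⁻¹`. -/
lemma chow_inverse_rec {rk : α → ℕ} (hm : StrictMono rk) {mu : α → α → ℤ} (hmu : IsMobius mu)
    (heul : ∀ s t : α, s ≤ t → mu s t = (-1 : ℤ) ^ (rk t - rk s)) {H : α → α → ℤ[X]}
    (hH : IsChow (fun s t : α => ((X : ℤ[X]) - 1) ^ (rk t - rk s)) H) (s : α) :
    X * ∑ w ∈ Finset.Icc s ⊤, (1 - X) ^ (rk w - rk s) * H w ⊤ - H s ⊤ =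
      (X - 1) * (1 - X) ^ (rk (⊤ : α) - rk s) := by
  have hassoc : ∑ w ∈ Finset.Icc s ⊤, (1 - X : ℤ[X]) ^ (rk w - rk s) *
      ∑ v ∈ Finset.Icc w ⊤, (X - 1) ^ (rk v - rk w) * H v ⊤ = H s ⊤ := by
    simp only [mul_sum]
    rw [sum_comm' (t' := Finset.Icc s ⊤) (s' := fun v => Finset.Icc s v)]
    · have : ∀ v ∈ Finset.Icc s ⊤, ∑ w ∈ Finset.Icc s v,
          (1 - X : ℤ[X]) ^ (rk w - rk s) * ((X - 1) ^ (rk v - rk w) * H v ⊤) =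
          if s = v then H v ⊤ else 0 := by
        intro v hv
        simp only [← mul_assoc]
        rw [← sum_mul, eulerian_inverse hm hmu heul (Finset.mem_Icc.1 hv).1]
        simp
      rw [sum_congr rfl this]
      simp
    · intro w v
      simp only [Finset.mem_Icc, le_top, and_true]
      exact ⟨fun h => ⟨h, h.1.trans h.2⟩, fun h => h.1⟩
  have hsum : ∑ w ∈ Finset.Icc s ⊤, (1 - X : ℤ[X]) ^ (rk w - rk s) *
      (X * H w ⊤ - ∑ v ∈ Finset.Icc w ⊤, (X - 1) ^ (rk v - rk w) * H v ⊤) =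
      (X - 1) * (1 - X) ^ (rk (⊤ : α) - rk s) := by
    simp only [chow_kernel_rec hm hH]
    simp [mul_comm]
  rw [← hsum]
  simp only [mul_sub, sum_sub_distrib]
  rw [hassoc, mul_sum]
  congr 1
  exact sum_congr rfl fun w _ => by ring

/-- The recursion of `chainPoly_rec`, satisfied by the Chow function. -/
lemma chow_rec {rk : α → ℕ} (hm : StrictMono rk) {mu : α → α → ℤ} (hmu : IsMobius mu)
    (heul : ∀ s t : α, s ≤ t → mu s t = (-1 : ℤ) ^ (rk t - rk s)) {H : α → α → ℤ[X]}
    (hH : IsChow (fun s t : α => ((X : ℤ[X]) - 1) ^ (rk t - rk s)) H) {s : α} (hs : s < ⊤) :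
    H s ⊤ = (1 - X) ^ (rk (⊤ : α) - rk s - 1) +
      ∑ w ∈ univ.filter (fun w : α => s < w ∧ w < ⊤),
        X * (1 - X) ^ (rk w - rk s - 1) * H w ⊤ := by
  have h := chow_inverse_rec hm hmu heul hH s
  have hset : Finset.Icc s ⊤ =
      insert s (insert ⊤ (univ.filter (fun w : α => s < w ∧ w < ⊤))) := by
    ext w
    simp only [Finset.mem_Icc, le_top, and_true, mem_insert, mem_filter, mem_univ, true_and]
    constructor
    · intro hw
      rcases hw.eq_or_lt with h | h
      · exact Or.inl h.symm
      · rcases (le_top : w ≤ ⊤).eq_or_lt with h' | h'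
        · exact Or.inr (Or.inl h')
        · exact Or.inr (Or.inr ⟨h, h'⟩)
    · rintro (rfl | rfl | h)
      · exact le_rfl
      · exact le_top
      · exact h.1.le
  have hsum : (1 - X : ℤ[X]) * ∑ w ∈ univ.filter (fun w : α => s < w ∧ w < ⊤),
        X * (1 - X) ^ (rk w - rk s - 1) * H w ⊤ =
      X * ∑ w ∈ univ.filter (fun w : α => s < w ∧ w < ⊤), (1 - X) ^ (rk w - rk s) * H w ⊤ := by
    rw [mul_sum, mul_sum]
    refine sum_congr rfl fun w hw => ?_
    have h1 := hm (mem_filter.1 hw).2.1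
    obtain ⟨k, hk⟩ : ∃ k, rk w - rk s = k + 1 := ⟨rk w - rk s - 1, by omega⟩
    rw [hk, Nat.add_sub_cancel, pow_succ]
    ring
  rw [hset, sum_insert (by simp [hs.ne]), sum_insert (by simp), chow_top hH] at h
  have hpos := hm hs
  obtain ⟨k, hk⟩ : ∃ k, rk (⊤ : α) - rk s = k + 1 := ⟨rk (⊤ : α) - rk s - 1, by omega⟩
  rw [hk, Nat.sub_self, pow_succ] at h
  rw [hk, Nat.add_sub_cancel]
  have hne : (1 - X : ℤ[X]) ≠ 0 := by
    intro h0
    simpa using congrArg (eval 0) h0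
  apply mul_left_cancel₀ hne
  rw [mul_add, hsum]
  linear_combination -h

lemma chow_eq_chainPoly {rk : α → ℕ} (hm : StrictMono rk) {mu : α → α → ℤ} (hmu : IsMobius mu)
    (heul : ∀ s t : α, s ≤ t → mu s t = (-1 : ℤ) ^ (rk t - rk s)) {H : α → α → ℤ[X]}
    (hH : IsChow (fun s t : α => ((X : ℤ[X]) - 1) ^ (rk t - rk s)) H) (s : α) :
    H s ⊤ = chainPoly rk s := by
  induction s using WellFoundedGT.induction with
  | ind s ih =>
    rcases (le_top : s ≤ ⊤).eq_or_lt with rfl | hs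
    · rw [chow_top hH, chainPoly_rec hm]
      simp [not_top_lt]
    · rw [chow_rec hm hmu heul hH hs, chainPoly_rec hm]
      congr 1
      exact sum_congr rfl fun w hw => by rw [ih w (mem_filter.1 hw).2.1]

end

/-- Theorem 5.4: for a finite graded bounded Eulerian poset `P` of rank `r` (so that
`ε_{st}(x) = (x-1)^{ρ_{st}}` is a `(P,ρ)`-kernel), the `ε`-Chow polynomial equals the
`h`-polynomial of the barycentric subdivision of `P`:
`ℋ_P(x) = Σ_{S ⊆ {1,…,r-1}} β_P(S) x^{|S|}`. -/
theorem eulerian_chow_eq_h_poly_of_barycentric {α : Type*}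
    [PartialOrder α] [BoundedOrder α] [Fintype α] [LocallyFiniteOrder α]
    (rk : α → ℕ) (hg : GradedData rk)
    (mu : α → α → ℤ) (hmu : IsMobius mu)
    (heul : ∀ s t : α, s ≤ t → mu s t = (-1 : ℤ) ^ (rk t - rk s))
    (H : α → α → Polynomial ℤ)
    (hH : IsChow (fun s t : α => ((X : Polynomial ℤ) - 1) ^ (rk t - rk s)) H) :
    H ⊥ ⊤ = ∑ S ∈ (Finset.Icc 1 (rk (⊤ : α) - 1)).powerset,
        Polynomial.C (flagH rk S) * X ^ S.card := by
  rw [sum_flagH_eq_chainPoly hg, chow_eq_chainPoly hg.mono hmu heul hH]
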